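/- Let N ≥ 1 and let Ω ⊆ ℝ^N be any nonempty open set. Then the constant (√(ℓ_N) ω_{N−1})^{−1} remains optimal on Ω: for every ε > 0 there exists a nonzero u ∈ C_c^∞(ℝ^N) with support contained in Ω such that ∫_{Ω} |∇^N u(x)| dx < (√(ℓ_N) · ω_{N−1} + ε) · ‖u‖_∞. -/

import Mathlib

open MeasureTheory Metric Filter Matrix

noncomputable section

/-- The mixed partial derivative `∂^m u / ∂x_{i 0} ⋯ ∂x_{i (m-1)} (x)`, realized as the
iterated Fréchet derivative applied to the corresponding standard basis vectors. -/
def mixedPartial (N m : ℕ) (u : EuclideanSpace ℝ (Fin N) → ℝ)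
    (i : Fin m → Fin N) (x : EuclideanSpace ℝ (Fin N)) : ℝ :=
  iteratedFDeriv ℝ m u x fun k => EuclideanSpace.single (i k) 1

/-- The Frobenius norm `|∇^m u (x)|` of the tensor of `m`-th order partial derivatives. -/
def gradNorm (N m : ℕ) (u : EuclideanSpace ℝ (Fin N) → ℝ)
    (x : EuclideanSpace ℝ (Fin N)) : ℝ :=
  Real.sqrt (∑ i : Fin m → Fin N, mixedPartial N m u i x ^ 2)

/-- The function `x ↦ log |x|`. -/
def logNorm (N : ℕ) (x : EuclideanSpace ℝ (Fin N)) : ℝ := Real.log ‖x‖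

/-- The constant `ℓ_N = ∑ (∂^N log|x|/∂x_{i_1}⋯∂x_{i_N} (e_1))²`. -/
def ell (N : ℕ) (hN : 0 < N) : ℝ :=
  ∑ i : Fin N → Fin N,
    mixedPartial N N (logNorm N) i (EuclideanSpace.single (⟨0, hN⟩ : Fin N) 1) ^ 2

/-- `ω_{N-1}`, the surface measure of the unit sphere `𝕊^{N-1} ⊂ ℝ^N`,
expressed as `N` times the volume of the unit ball. -/
def omegaSphere (N : ℕ) : ℝ :=
  N * (volume (ball (0 : EuclideanSpace ℝ (Fin N)) 1)).toReal

/-!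
The near-extremals are logarithmic cutoffs `x ↦ φ (1 - η log |x|)` with `φ` a smooth transition from
`0` to `1`; write `ψ` for the derivative of `φ`. The derivatives of order at least two of
`w ↦ φ (1 - η w)` are `O(η²)`, so on the annulus `1 ≤ |x| ≤ exp η⁻¹`, outside of which the cutoff is
constant, the chain rule gives
`∇^N (φ (1 - η log |x|)) = -η ψ (1 - η log |x|) ∇^N log |x| + O(η² |x|^{-N})`.
The function `log |x|` is invariant under isometries and changes by a constant under dilations,
hence `|∇^N log |x|| = √ℓ_N |x|^{-N}`. In polar coordinates and with `s = 1 - η log r`, the integral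
of `|∇^N u|` is at most `ω_{N-1} ∫₀¹ (√ℓ_N ψ(s) + K η) ds = ω_{N-1} (√ℓ_N + K η)`, which tends to
`√ℓ_N ω_{N-1}` as `η → 0`, while the cutoff has supremum `1`. Both `∫ |∇^N u|` and the supremum are
unchanged under `u ↦ u (c (· - a))`, which moves the support into any nonempty open set.
-/

section Frobenius

variable {ι κ E : Type*} [Fintype ι] [Fintype κ] [NormedAddCommGroup E] [InnerProductSpace ℝ E]
  {m : ℕ}

/-- The Frobenius (Hilbert–Schmidt) norm of an `m`-linear form, encoded as the Euclidean norm of its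
array of coefficients in the orthonormal basis `b`. -/
def frobeniusNorm (b : OrthonormalBasis ι ℝ E) (T : E [×m]→L[ℝ] ℝ) : ℝ :=
  ‖(WithLp.toLp 2 fun i => T fun k => b (i k) : EuclideanSpace ℝ (Fin m → ι))‖

lemma frobeniusNorm_sq (b : OrthonormalBasis ι ℝ E) (T : E [×m]→L[ℝ] ℝ) :
    frobeniusNorm b T ^ 2 = ∑ i : Fin m → ι, T (fun k => b (i k)) ^ 2 := by
  simp [frobeniusNorm, EuclideanSpace.norm_sq_eq]

lemma frobeniusNorm_nonneg (b : OrthonormalBasis ι ℝ E) (T : E [×m]→L[ℝ] ℝ) :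
    0 ≤ frobeniusNorm b T :=
  norm_nonneg _

lemma frobeniusNorm_zero (b : OrthonormalBasis ι ℝ E) :
    frobeniusNorm b (0 : E [×m]→L[ℝ] ℝ) = 0 :=
  norm_zero (E := EuclideanSpace ℝ (Fin m → ι))

lemma frobeniusNorm_add_le (b : OrthonormalBasis ι ℝ E) (S T : E [×m]→L[ℝ] ℝ) :
    frobeniusNorm b (S + T) ≤ frobeniusNorm b S + frobeniusNorm b T :=
  norm_add_le (WithLp.toLp 2 fun i => S fun k => b (i k) : EuclideanSpace ℝ (Fin m → ι))
    (WithLp.toLp 2 fun i => T fun k => b (i k))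

lemma frobeniusNorm_smul (b : OrthonormalBasis ι ℝ E) (a : ℝ) (T : E [×m]→L[ℝ] ℝ) :
    frobeniusNorm b (a • T) = |a| * frobeniusNorm b T :=
  norm_smul a (WithLp.toLp 2 fun i => T fun k => b (i k) : EuclideanSpace ℝ (Fin m → ι))

lemma continuous_frobeniusNorm (b : OrthonormalBasis ι ℝ E) :
    Continuous (frobeniusNorm b : (E [×m]→L[ℝ] ℝ) → ℝ) := by
  unfold frobeniusNorm
  fun_prop

lemma frobeniusNorm_le_sqrt_card_mul_norm (b : OrthonormalBasis ι ℝ E) (T : E [×m]→L[ℝ] ℝ) :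
    frobeniusNorm b T ≤ √(Fintype.card (Fin m → ι)) * ‖T‖ := by
  have coeff_le (i : Fin m → ι) : T (fun k => b (i k)) ^ 2 ≤ ‖T‖ ^ 2 := by
    simpa [sq_abs] using pow_le_pow_left₀ (norm_nonneg _) (T.le_opNorm fun k => b (i k)) 2
  refine le_of_sq_le_sq ?_ (by positivity)
  rw [frobeniusNorm_sq, mul_pow, Real.sq_sqrt (by positivity), ← nsmul_eq_mul, ← Finset.card_univ]
  exact Finset.sum_le_card_nsmul _ _ _ fun i _ => coeff_le i

lemma frobeniusNorm_sq_succ (b : OrthonormalBasis ι ℝ E) (T : E [×(m + 1)]→L[ℝ] ℝ) :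
    frobeniusNorm b T ^ 2 = ∑ j, frobeniusNorm b (T.curryLeft (b j)) ^ 2 := by
  simp only [frobeniusNorm_sq, ContinuousMultilinearMap.curryLeft_apply]
  rw [← (Fin.consEquiv fun _ => ι).sum_comp, Fintype.sum_prod_type]
  refine Finset.sum_congr rfl fun j _ => Finset.sum_congr rfl fun i _ => ?_
  congr 2
  ext k
  cases k using Fin.cases <;> simp [Fin.consEquiv]

lemma frobeniusNorm_eq_frobeniusNorm (b : OrthonormalBasis ι ℝ E) (c : OrthonormalBasis κ ℝ E)
    (T : E [×m]→L[ℝ] ℝ) : frobeniusNorm b T = frobeniusNorm c T := by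
  rw [← sq_eq_sq₀ (frobeniusNorm_nonneg b T) (frobeniusNorm_nonneg c T)]
  induction m with
  | zero =>
    have apply_eq (v : Fin 0 → E) : T v = T ![] := congrArg T (Subsingleton.elim v ![])
    simp [frobeniusNorm_sq, apply_eq]
  | succ m ih =>
    have parseval (v : Fin m → E) :
        ∑ j, T.curryLeft (b j) v ^ 2 = ∑ j, T.curryLeft (c j) v ^ 2 := by
      let L : StrongDual ℝ E := (ContinuousMultilinearMap.apply ℝ (fun _ => E) ℝ v).comp T.curryLeft
      exact (b.norm_dual L).symm.trans (c.norm_dual L)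
    calc frobeniusNorm b T ^ 2
        = ∑ j, ∑ i : Fin m → κ, T.curryLeft (b j) (fun k => c (i k)) ^ 2 := by
          simp only [frobeniusNorm_sq_succ, ih, frobeniusNorm_sq c]
      _ = ∑ i : Fin m → κ, ∑ j, T.curryLeft (b j) (fun k => c (i k)) ^ 2 := Finset.sum_comm
      _ = ∑ i : Fin m → κ, ∑ j, T.curryLeft (c j) (fun k => c (i k)) ^ 2 := by simp only [parseval]
      _ = ∑ j, ∑ i : Fin m → κ, T.curryLeft (c j) (fun k => c (i k)) ^ 2 := Finset.sum_comm
      _ = frobeniusNorm c T ^ 2 := by rw [frobeniusNorm_sq_succ]; simp only [frobeniusNorm_sq]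

lemma frobeniusNorm_compContinuousLinearMap_linearIsometryEquiv (b : OrthonormalBasis ι ℝ E)
    (R : E ≃ₗᵢ[ℝ] E) (T : E [×m]→L[ℝ] ℝ) :
    frobeniusNorm b (T.compContinuousLinearMap fun _ => (R : E →L[ℝ] E)) = frobeniusNorm b T :=
  calc frobeniusNorm b (T.compContinuousLinearMap fun _ => (R : E →L[ℝ] E))
      = frobeniusNorm (b.map R) T := by simp [frobeniusNorm]
    _ = frobeniusNorm b T := frobeniusNorm_eq_frobeniusNorm _ _ _

end Frobenius

section GradNorm

variable {N m : ℕ} {u : EuclideanSpace ℝ (Fin N) → ℝ}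

lemma gradNorm_eq_frobeniusNorm (u : EuclideanSpace ℝ (Fin N) → ℝ)
    (x : EuclideanSpace ℝ (Fin N)) :
    gradNorm N m u x =
      frobeniusNorm (EuclideanSpace.basisFun (Fin N) ℝ) (iteratedFDeriv ℝ m u x) := by
  simp [gradNorm, mixedPartial, frobeniusNorm, EuclideanSpace.norm_eq]

lemma gradNorm_nonneg (u : EuclideanSpace ℝ (Fin N) → ℝ) (x : EuclideanSpace ℝ (Fin N)) :
    0 ≤ gradNorm N m u x :=
  Real.sqrt_nonneg _

lemma gradNorm_eq_zero_of_eventuallyEq_const (hm : m ≠ 0) {x : EuclideanSpace ℝ (Fin N)} {c : ℝ}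
    (h : u =ᶠ[nhds x] fun _ => c) : gradNorm N m u x = 0 := by
  rw [gradNorm_eq_frobeniusNorm, (h.iteratedFDeriv ℝ m).self_of_nhds,
    iteratedFDeriv_const_of_ne hm, Pi.zero_apply, frobeniusNorm_zero]

lemma continuous_gradNorm (hu : ContDiff ℝ m u) : Continuous (gradNorm N m u) := by
  simp only [funext (gradNorm_eq_frobeniusNorm u)]
  exact (continuous_frobeniusNorm _).comp (hu.continuous_iteratedFDeriv le_rfl)

lemma integrable_gradNorm (hu : ContDiff ℝ m u) (hc : HasCompactSupport u) :
    Integrable (gradNorm N m u) := by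
  refine (continuous_gradNorm hu).integrable_of_hasCompactSupport ?_
  refine (hc.iteratedFDeriv (𝕜 := ℝ) m).mono fun x hx hx0 => hx ?_
  rw [gradNorm_eq_frobeniusNorm, hx0, frobeniusNorm_zero]

lemma gradNorm_comp_smul_sub (hu : ContDiff ℝ m u) (c : ℝ) (a x : EuclideanSpace ℝ (Fin N)) :
    gradNorm N m (fun y => u (c • (y - a))) x = |c| ^ m * gradNorm N m u (c • (x - a)) := by
  simp only [gradNorm_eq_frobeniusNorm]
  rw [iteratedFDeriv_comp_sub (f := fun z => u (c • z)), iteratedFDeriv_comp_const_smul c hu,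
    frobeniusNorm_smul, abs_pow]

lemma integral_gradNorm_comp_smul_sub (hu : ContDiff ℝ N u) {c : ℝ} (hc : c ≠ 0)
    (a : EuclideanSpace ℝ (Fin N)) :
    ∫ x, gradNorm N N (fun y => u (c • (y - a))) x = ∫ x, gradNorm N N u x := by
  simp only [gradNorm_comp_smul_sub hu]
  rw [integral_const_mul, integral_sub_right_eq_self (fun x => gradNorm N N u (c • x)),
    Measure.integral_comp_smul, finrank_euclideanSpace_fin, smul_eq_mul, ← mul_assoc, abs_inv,
    abs_pow, mul_inv_cancel₀ (by positivity), one_mul]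

end GradNorm

section IteratedDeriv

lemma exists_norm_iteratedDeriv_le_of_isCompact {f : ℝ → ℝ} {n : ℕ} (hf : ContDiff ℝ n f)
    {s : Set ℝ} (hs : IsCompact s) : ∃ C, 0 ≤ C ∧ ∀ t ∈ s, ∀ i ≤ n, ‖iteratedDeriv i f t‖ ≤ C := by
  have hcont : Continuous fun t => ∑ i ∈ Finset.range (n + 1), ‖iteratedDeriv i f t‖ :=
    continuous_finsetSum _ fun i hi =>
      (hf.continuous_iteratedDeriv i (mod_cast Finset.mem_range_succ_iff.1 hi)).norm
  obtain ⟨C, hC⟩ := hs.exists_bound_of_continuousOn hcont.continuousOn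
  refine ⟨|C|, abs_nonneg C, fun t ht i hi => ?_⟩
  calc ‖iteratedDeriv i f t‖ ≤ ∑ i ∈ Finset.range (n + 1), ‖iteratedDeriv i f t‖ :=
        Finset.single_le_sum (f := fun i => ‖iteratedDeriv i f t‖) (fun _ _ => norm_nonneg _)
          (Finset.mem_range_succ_iff.2 hi)
    _ ≤ |C| := (Real.le_norm_self _).trans ((hC t ht).trans (le_abs_self C))

lemma iteratedDeriv_comp_const_sub_mul {f : ℝ → ℝ} {n : ℕ} (hf : ContDiff ℝ n f) (a b t : ℝ) :
    iteratedDeriv n (fun w => f (a - b * w)) t = (-b) ^ n * iteratedDeriv n f (a - b * t) := by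
  have hfa : ContDiff ℝ n fun z => f (a + z) := hf.comp (by fun_prop)
  have h := congrFun (iteratedDeriv_comp_const_mul hfa (-b)) t
  simpa only [iteratedDeriv_comp_const_add, neg_mul, ← sub_eq_add_neg] using h

end IteratedDeriv

section ChainRule

lemma norm_iteratedFDeriv_comp_le_of_contDiffAt {E F G : Type*} [NormedAddCommGroup E]
    [NormedSpace ℝ E] [NormedAddCommGroup F] [NormedSpace ℝ F] [NormedAddCommGroup G]
    [NormedSpace ℝ G] {g : F → G} {f : E → F} {n : ℕ} {x : E} (hg : ContDiff ℝ n g)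
    (hf : ContDiffAt ℝ n f x) {C D : ℝ} (hC : ∀ i ≤ n, ‖iteratedFDeriv ℝ i g (f x)‖ ≤ C)
    (hD : ∀ i, 1 ≤ i → i ≤ n → ‖iteratedFDeriv ℝ i f x‖ ≤ D ^ i) :
    ‖iteratedFDeriv ℝ n (g ∘ f) x‖ ≤ n.factorial * C * D ^ n := by
  obtain ⟨U, hU, hfU⟩ := hf.contDiffOn le_rfl (by simp)
  obtain ⟨V, hVU, hV, hxV⟩ := _root_.mem_nhds_iff.1 hU
  rw [← iteratedFDerivWithin_of_isOpen n hV hxV]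
  refine norm_iteratedFDerivWithin_comp_le hg.contDiffOn (hfU.mono hVU) le_rfl uniqueDiffOn_univ
    hV.uniqueDiffOn (Set.mapsTo_univ _ _) hxV (fun i hi => ?_) fun i hi hin => ?_
  · rw [iteratedFDerivWithin_univ]
    exact hC i hi
  · rw [iteratedFDerivWithin_of_isOpen i hV hxV]
    exact hD i hi hin

lemma norm_iteratedDeriv_sub_tangent_le {g : ℝ → ℝ} {n : ℕ} (hg : ContDiff ℝ n g) {t C : ℝ}
    (hC0 : 0 ≤ C) (hC : ∀ i, 2 ≤ i → i ≤ n → ‖iteratedDeriv i g t‖ ≤ C) {i : ℕ} (hi : i ≤ n) :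
    ‖iteratedDeriv i (g - fun w => g t + deriv g t * (w - t)) t‖ ≤ C := by
  rw [iteratedDeriv_sub (hg.contDiffAt.of_le (mod_cast hi)) (by fun_prop)]
  match i with
  | 0 => simpa
  | 1 => simpa [iteratedDeriv_one]
  | i + 2 =>
    have tangent_deriv : deriv (fun w => g t + deriv g t * (w - t)) = fun _ => deriv g t := by
      ext w
      simp
    have tangent_iteratedDeriv :
        iteratedDeriv (i + 2) (fun w => g t + deriv g t * (w - t)) t = 0 := by
      simp [iteratedDeriv_succ', tangent_deriv]
    rw [tangent_iteratedDeriv, sub_zero]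
    exact hC (i + 2) (by omega) hi

lemma norm_iteratedFDeriv_comp_sub_smul_le {E : Type*} [NormedAddCommGroup E] [NormedSpace ℝ E]
    {g : ℝ → ℝ} {f : E → ℝ} {n : ℕ} {x : E} (hn : n ≠ 0) (hg : ContDiff ℝ n g)
    (hf : ContDiffAt ℝ n f x) {C D : ℝ} (hC0 : 0 ≤ C)
    (hC : ∀ i, 2 ≤ i → i ≤ n → ‖iteratedDeriv i g (f x)‖ ≤ C)
    (hD : ∀ i, 1 ≤ i → i ≤ n → ‖iteratedFDeriv ℝ i f x‖ ≤ D ^ i) :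
    ‖iteratedFDeriv ℝ n (g ∘ f) x - deriv g (f x) • iteratedFDeriv ℝ n f x‖ ≤
      n.factorial * C * D ^ n := by
  -- Subtracting the tangent line of `g` at `f x` leaves only derivatives of order at least two in
  -- the Faà di Bruno expansion, and changes `iteratedFDeriv ℝ n (g ∘ f) x` by the stated term.
  set t := f x
  set h : ℝ → ℝ := g - fun w => g t + deriv g t * (w - t) with hh
  have hh_contDiff : ContDiff ℝ n h := hg.sub (by fun_prop)
  have comp_eq : h ∘ f = g ∘ f - deriv g t • f - fun _ => g t - deriv g t * t := by
    ext y
    simp only [hh, Function.comp_apply, Pi.sub_apply, Pi.smul_apply, smul_eq_mul]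
    ring
  have iteratedFDeriv_eq : iteratedFDeriv ℝ n (h ∘ f) x =
      iteratedFDeriv ℝ n (g ∘ f) x - deriv g t • iteratedFDeriv ℝ n f x := by
    have hgf : ContDiffAt ℝ n (g ∘ f) x := hg.contDiffAt.comp x hf
    have hsmul : ContDiffAt ℝ n (deriv g t • f) x := hf.const_smul (deriv g t)
    have hsub : ContDiffAt ℝ n (g ∘ f - deriv g t • f) x := hgf.sub hsmul
    rw [comp_eq, iteratedFDeriv_sub_apply hsub contDiffAt_const,
      iteratedFDeriv_sub_apply hgf hsmul, iteratedFDeriv_const_smul_apply hf,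
      iteratedFDeriv_const_of_ne hn, Pi.zero_apply, sub_zero]
  rw [← iteratedFDeriv_eq]
  refine norm_iteratedFDeriv_comp_le_of_contDiffAt hh_contDiff hf (fun i hi => ?_) hD
  rw [norm_iteratedFDeriv_eq_norm_iteratedDeriv]
  exact norm_iteratedDeriv_sub_tangent_le hg hC0 hC hi

end ChainRule

section LogNorm

variable {E : Type*} [NormedAddCommGroup E] [InnerProductSpace ℝ E] {m : ℕ}

lemma contDiffAt_log_norm {n : WithTop ℕ∞} {x : E} (hx : x ≠ 0) :
    ContDiffAt ℝ n (fun y : E => Real.log ‖y‖) x :=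
  (contDiffAt_norm ℝ hx).log (norm_ne_zero_iff.2 hx)

lemma iteratedFDeriv_comp_continuousLinearEquiv {F G : Type*} [NormedAddCommGroup F]
    [NormedSpace ℝ F] [NormedAddCommGroup G] [NormedSpace ℝ G] (A : F ≃L[ℝ] F) (f : F → G) (x : F) :
    iteratedFDeriv ℝ m (f ∘ A) x =
      (iteratedFDeriv ℝ m f (A x)).compContinuousLinearMap fun _ => (A : F →L[ℝ] F) := by
  simpa only [iteratedFDerivWithin_univ, Set.preimage_univ] using
    A.iteratedFDerivWithin_comp_right f uniqueDiffOn_univ (Set.mem_univ (A x)) m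

lemma exists_iteratedFDeriv_log_norm_eq (hm : m ≠ 0) {e x : E} (he : ‖e‖ = 1) (hx : x ≠ 0) :
    ∃ R : E ≃ₗᵢ[ℝ] E, iteratedFDeriv ℝ m (fun y : E => Real.log ‖y‖) x = (‖x‖⁻¹ ^ m) •
      (iteratedFDeriv ℝ m (fun y : E => Real.log ‖y‖) e).compContinuousLinearMap
        fun _ => (R : E →L[ℝ] E) := by
  have hx_norm : ‖x‖ ≠ 0 := norm_ne_zero_iff.2 hx
  let R : E ≃ₗᵢ[ℝ] E := (ℝ ∙ (x - ‖x‖ • e))ᗮ.reflection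
  have hRx : R x = ‖x‖ • e := Submodule.reflection_sub (by simp [norm_smul, he])
  let A : E ≃L[ℝ] E := R.toContinuousLinearEquiv.trans
    (ContinuousLinearEquiv.smulLeft (Units.mk0 ‖x‖⁻¹ (inv_ne_zero hx_norm)))
  have hA (y : E) : A y = ‖x‖⁻¹ • R y := rfl
  have hAx : A x = e := by rw [hA, hRx, inv_smul_smul₀ hx_norm]
  have log_comp_A : (fun y : E => Real.log ‖y‖) ∘ A =ᶠ[nhds x]
      (fun y => Real.log ‖y‖) - fun _ => Real.log ‖x‖ := by
    filter_upwards [isOpen_ne.mem_nhds hx] with y hy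
    simp only [Function.comp_apply, hA, norm_smul, norm_inv, norm_norm,
      LinearIsometryEquiv.norm_map, Pi.sub_apply]
    rw [Real.log_mul (inv_ne_zero hx_norm) (norm_ne_zero_iff.2 hy), Real.log_inv]
    ring
  refine ⟨R, ?_⟩
  calc iteratedFDeriv ℝ m (fun y : E => Real.log ‖y‖) x
      = iteratedFDeriv ℝ m ((fun y : E => Real.log ‖y‖) ∘ A) x := by
        rw [(log_comp_A.iteratedFDeriv ℝ m).self_of_nhds,
          iteratedFDeriv_sub_apply (contDiffAt_log_norm hx) contDiffAt_const,
          iteratedFDeriv_const_of_ne hm, Pi.zero_apply, sub_zero]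
    _ = (iteratedFDeriv ℝ m (fun y : E => Real.log ‖y‖) e).compContinuousLinearMap
          fun _ => (A : E →L[ℝ] E) := by rw [iteratedFDeriv_comp_continuousLinearEquiv, hAx]
    _ = _ := by
        ext v
        simp [hA, ContinuousMultilinearMap.map_smul_univ]

lemma norm_iteratedFDeriv_log_norm (hm : m ≠ 0) {e x : E} (he : ‖e‖ = 1) (hx : x ≠ 0) :
    ‖iteratedFDeriv ℝ m (fun y : E => Real.log ‖y‖) x‖ =
      ‖x‖⁻¹ ^ m * ‖iteratedFDeriv ℝ m (fun y : E => Real.log ‖y‖) e‖ := by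
  obtain ⟨R, hR⟩ := exists_iteratedFDeriv_log_norm_eq hm he hx
  rw [hR, norm_smul, ContinuousMultilinearMap.norm_compContinuous_linearIsometryEquiv]
  simp

lemma gradNorm_logNorm {N : ℕ} (hm : m ≠ 0) {e x : EuclideanSpace ℝ (Fin N)} (he : ‖e‖ = 1)
    (hx : x ≠ 0) :
    gradNorm N m (logNorm N) x = ‖x‖⁻¹ ^ m * gradNorm N m (logNorm N) e := by
  obtain ⟨R, hR⟩ := exists_iteratedFDeriv_log_norm_eq hm he hx
  simp only [gradNorm_eq_frobeniusNorm]
  change frobeniusNorm _ (iteratedFDeriv ℝ m (fun y => Real.log ‖y‖) x) = _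
  rw [hR, frobeniusNorm_smul, frobeniusNorm_compContinuousLinearMap_linearIsometryEquiv,
    abs_of_nonneg (by positivity)]
  rfl

lemma gradNorm_logNorm_eq_sqrt_ell {N : ℕ} (hN : 0 < N) {x : EuclideanSpace ℝ (Fin N)}
    (hx : x ≠ 0) : gradNorm N N (logNorm N) x = ‖x‖⁻¹ ^ N * √(ell N hN) :=
  gradNorm_logNorm hN.ne' (e := EuclideanSpace.single (⟨0, hN⟩ : Fin N) 1) (by simp) hx

variable (E) in
lemma exists_norm_iteratedFDeriv_log_norm_le (n : ℕ) :
    ∃ D : ℝ, ∀ x : E, x ≠ 0 → ∀ i, 1 ≤ i → i ≤ n →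
      ‖iteratedFDeriv ℝ i (fun y : E => Real.log ‖y‖) x‖ ≤ (D * ‖x‖⁻¹) ^ i := by
  rcases subsingleton_or_nontrivial E with _ | _
  · exact ⟨0, fun x hx => absurd (Subsingleton.elim x 0) hx⟩
  obtain ⟨e, he⟩ := exists_norm_eq E zero_le_one
  let d (i : ℕ) : ℝ := ‖iteratedFDeriv ℝ i (fun y : E => Real.log ‖y‖) e‖
  let D : ℝ := 1 + ∑ i ∈ Finset.range (n + 1), d i
  have one_le_D : 1 ≤ D := le_add_of_nonneg_right (Finset.sum_nonneg fun i _ => norm_nonneg _)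
  have d_le_D (i : ℕ) (hi : i ≤ n) : d i ≤ D :=
    (Finset.single_le_sum (f := d) (fun i _ => norm_nonneg _)
      (Finset.mem_range.2 (by omega))).trans (le_add_of_nonneg_left zero_le_one)
  refine ⟨D, fun x hx i hi hin => ?_⟩
  rw [norm_iteratedFDeriv_log_norm (by omega) he hx, mul_pow, mul_comm]
  gcongr
  exact (d_le_D i hin).trans (le_self_pow₀ one_le_D (by omega))

end LogNorm

section LogCutoff

variable {E : Type*} [NormedAddCommGroup E] {η : ℝ} {x : E}

/-- The logarithmic cutoff, equal to `1` on the unit ball and to `0` outside the ball of radius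
`exp η⁻¹`, and a smooth function of `log ‖x‖` in between. The convention `Real.log 0 = 0` gives it
the value `1` at the origin. -/
def logCutoff (η : ℝ) (x : E) : ℝ := Real.smoothTransition (1 - η * Real.log ‖x‖)

lemma logCutoff_of_norm_le_one (hη : 0 ≤ η) (hx : ‖x‖ ≤ 1) : logCutoff η x = 1 := by
  have hlog : η * Real.log ‖x‖ ≤ 0 :=
    mul_nonpos_of_nonneg_of_nonpos hη (Real.log_nonpos (norm_nonneg x) hx)
  exact Real.smoothTransition.one_of_one_le (by linarith)

lemma logCutoff_of_exp_inv_le_norm (hη : 0 < η) (hx : Real.exp η⁻¹ ≤ ‖x‖) :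
    logCutoff η x = 0 := by
  have hlog : η⁻¹ ≤ Real.log ‖x‖ := (Real.le_log_iff_exp_le ((Real.exp_pos _).trans_le hx)).2 hx
  rw [inv_le_iff_one_le_mul₀' hη] at hlog
  exact Real.smoothTransition.zero_of_nonpos (by linarith)

lemma one_sub_mul_log_mem_Icc (hη : 0 < η) {r : ℝ} (hr : r ∈ Set.Icc 1 (Real.exp η⁻¹)) :
    1 - η * Real.log r ∈ Set.Icc (0 : ℝ) 1 := by
  have hlog_nonneg : 0 ≤ Real.log r := Real.log_nonneg hr.1
  have hlog_le : Real.log r ≤ η⁻¹ :=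
    (Real.log_le_iff_le_exp (zero_lt_one.trans_le hr.1)).2 hr.2
  rw [← one_div, le_div_iff₀' hη] at hlog_le
  exact ⟨by linarith, by linarith [mul_nonneg hη.le hlog_nonneg]⟩

lemma iSup_abs_logCutoff (hη : 0 ≤ η) : ⨆ x : E, |logCutoff η x| = 1 := by
  have abs_le_one (x : E) : |logCutoff η x| ≤ 1 := by
    rw [logCutoff, abs_of_nonneg (Real.smoothTransition.nonneg _)]
    exact Real.smoothTransition.le_one _
  refine le_antisymm (ciSup_le abs_le_one) ?_
  calc (1 : ℝ) = |logCutoff η (0 : E)| := by rw [logCutoff_of_norm_le_one hη (by simp), abs_one]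
    _ ≤ ⨆ x : E, |logCutoff η x| := le_ciSup ⟨1, Set.forall_mem_range.2 abs_le_one⟩ 0

lemma hasCompactSupport_logCutoff [ProperSpace E] (hη : 0 < η) :
    HasCompactSupport (logCutoff η : E → ℝ) := by
  refine .of_support_subset_isCompact (isCompact_closedBall 0 (Real.exp η⁻¹)) fun x hx => ?_
  rw [mem_closedBall_zero_iff]
  exact le_of_not_ge fun h => hx (logCutoff_of_exp_inv_le_norm hη h)

variable [InnerProductSpace ℝ E]

lemma contDiff_logCutoff {n : ℕ∞} (hη : 0 ≤ η) : ContDiff ℝ n (logCutoff η : E → ℝ) := by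
  refine contDiff_iff_contDiffAt.2 fun x => ?_
  rcases eq_or_ne x 0 with rfl | hx
  · have eq_one : logCutoff η =ᶠ[nhds (0 : E)] fun _ => 1 := by
      filter_upwards [closedBall_mem_nhds (0 : E) one_pos] with y hy
      exact logCutoff_of_norm_le_one hη (mem_closedBall_zero_iff.1 hy)
    exact contDiffAt_const.congr_of_eventuallyEq eq_one
  · exact Real.smoothTransition.contDiffAt.comp x
      (contDiffAt_const.sub (contDiffAt_const.mul (contDiffAt_log_norm hx)))

variable (E) in
lemma exists_norm_iteratedFDeriv_logCutoff_add_smul_le {m : ℕ} (hm : m ≠ 0) :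
    ∃ K : ℝ, ∀ η ∈ Set.Ioc (0 : ℝ) 1, ∀ x : E, ‖x‖ ∈ Set.Icc 1 (Real.exp η⁻¹) →
      ‖iteratedFDeriv ℝ m (logCutoff η) x +
        (η * deriv Real.smoothTransition (1 - η * Real.log ‖x‖)) •
          iteratedFDeriv ℝ m (fun y : E => Real.log ‖y‖) x‖ ≤ K * η ^ 2 * ‖x‖⁻¹ ^ m := by
  obtain ⟨C, hC0, hC⟩ := exists_norm_iteratedDeriv_le_of_isCompact
    (Real.smoothTransition.contDiff (n := m)) (isCompact_Icc (a := 0) (b := 1))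
  obtain ⟨D, hD⟩ := exists_norm_iteratedFDeriv_log_norm_le E m
  refine ⟨m.factorial * C * D ^ m, fun η ⟨hη, hη1⟩ x hx => ?_⟩
  have hx0 : x ≠ 0 := norm_pos_iff.1 (zero_lt_one.trans_le hx.1)
  let g (w : ℝ) : ℝ := Real.smoothTransition (1 - η * w)
  have g_contDiff : ContDiff ℝ m g := Real.smoothTransition.contDiff.comp (by fun_prop)
  have g_iteratedDeriv (i : ℕ) (t : ℝ) :
      iteratedDeriv i g t = (-η) ^ i * iteratedDeriv i Real.smoothTransition (1 - η * t) :=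
    iteratedDeriv_comp_const_sub_mul (Real.smoothTransition.contDiff (n := i)) 1 η t
  have g_deriv : deriv g (Real.log ‖x‖) =
      -(η * deriv Real.smoothTransition (1 - η * Real.log ‖x‖)) := by
    simpa [iteratedDeriv_one] using g_iteratedDeriv 1 (Real.log ‖x‖)
  have g_bound (i : ℕ) (hi : 2 ≤ i) (him : i ≤ m) :
      ‖iteratedDeriv i g (Real.log ‖x‖)‖ ≤ η ^ 2 * C := by
    rw [g_iteratedDeriv, norm_mul, norm_pow, norm_neg, Real.norm_of_nonneg hη.le]
    gcongr ?_ * ?_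
    · exact pow_le_pow_of_le_one hη.le hη1 hi
    · exact hC _ (one_sub_mul_log_mem_Icc hη hx) i him
  have hcomp := norm_iteratedFDeriv_comp_sub_smul_le hm g_contDiff
    (contDiffAt_log_norm hx0) (by positivity) g_bound (hD x hx0)
  rw [g_deriv, neg_smul, sub_neg_eq_add] at hcomp
  exact hcomp.trans_eq (by ring)

lemma exists_gradNorm_logCutoff_le (N : ℕ) {m : ℕ} (hm : m ≠ 0) :
    ∃ K : ℝ, ∀ η ∈ Set.Ioc (0 : ℝ) 1, ∀ x : EuclideanSpace ℝ (Fin N),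
      ‖x‖ ∈ Set.Icc 1 (Real.exp η⁻¹) → gradNorm N m (logCutoff η) x ≤
        η * deriv Real.smoothTransition (1 - η * Real.log ‖x‖) * gradNorm N m (logNorm N) x +
          K * η ^ 2 * ‖x‖⁻¹ ^ m := by
  obtain ⟨K, hK⟩ := exists_norm_iteratedFDeriv_logCutoff_add_smul_le (EuclideanSpace ℝ (Fin N)) hm
  refine ⟨√(Fintype.card (Fin m → Fin N)) * K, fun η hη x hx => ?_⟩
  let b := EuclideanSpace.basisFun (Fin N) ℝ
  set a : ℝ := η * deriv Real.smoothTransition (1 - η * Real.log ‖x‖)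
  set L := iteratedFDeriv ℝ m (logNorm N) x
  set T := iteratedFDeriv ℝ m (logCutoff η) x
  have ha : 0 ≤ a := mul_nonneg hη.1.le Real.smoothTransition.monotone.deriv_nonneg
  have hT : ‖T + a • L‖ ≤ K * η ^ 2 * ‖x‖⁻¹ ^ m := hK η hη x hx
  calc gradNorm N m (logCutoff η) x
      = frobeniusNorm b (-a • L + (T + a • L)) := by
        rw [gradNorm_eq_frobeniusNorm, neg_smul, add_comm T, neg_add_cancel_left]
    _ ≤ frobeniusNorm b (-a • L) + frobeniusNorm b (T + a • L) := frobeniusNorm_add_le _ _ _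
    _ ≤ a * gradNorm N m (logNorm N) x + √(Fintype.card (Fin m → Fin N)) * ‖T + a • L‖ := by
        rw [frobeniusNorm_smul, abs_neg, abs_of_nonneg ha, gradNorm_eq_frobeniusNorm]
        gcongr
        exact frobeniusNorm_le_sqrt_card_mul_norm _ _
    _ ≤ a * gradNorm N m (logNorm N) x +
          √(Fintype.card (Fin m → Fin N)) * (K * η ^ 2 * ‖x‖⁻¹ ^ m) := by gcongr
    _ = _ := by ring

end LogCutoff

section Integrals

lemma setIntegral_norm_mem_Icc_addHaar {E : Type*} [NormedAddCommGroup E] [NormedSpace ℝ E]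
    [FiniteDimensional ℝ E] [Nontrivial E] [MeasurableSpace E] [BorelSpace E] (μ : Measure E)
    [μ.IsAddHaarMeasure] {a b : ℝ} (ha : 0 < a) (hab : a ≤ b) (g : ℝ → ℝ) :
    ∫ x in {x | ‖x‖ ∈ Set.Icc a b}, (‖x‖ ^ Module.finrank ℝ E)⁻¹ * g ‖x‖ ∂μ =
      Module.finrank ℝ E * μ.real (ball 0 1) * ∫ r in a..b, r⁻¹ * g r := by
  set d := Module.finrank ℝ E with hd
  let G : ℝ → ℝ := (Set.Icc a b).indicator fun r => (r ^ d)⁻¹ * g r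
  have radial_density : (fun r => r ^ (d - 1) • G r) =
      (Set.Icc a b).indicator fun r => r⁻¹ * g r := by
    have hd_pos : 0 < d := Module.finrank_pos
    ext r
    by_cases hr : r ∈ Set.Icc a b
    · have hr0 : r ≠ 0 := (ha.trans_le hr.1).ne'
      simp only [G, Set.indicator_of_mem hr, smul_eq_mul]
      rw [← mul_assoc, ← Nat.sub_add_cancel hd_pos, Nat.add_sub_cancel, pow_succ, mul_inv,
        mul_inv_cancel_left₀ (pow_ne_zero _ hr0)]
    · simp only [G, Set.indicator_of_notMem hr, smul_zero]
  have Icc_subset_Ioi : Set.Icc a b ⊆ Set.Ioi 0 := fun r hr => ha.trans_le hr.1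
  calc ∫ x in {x | ‖x‖ ∈ Set.Icc a b}, (‖x‖ ^ d)⁻¹ * g ‖x‖ ∂μ
      = ∫ x, G ‖x‖ ∂μ := (integral_indicator (measurableSet_Icc.preimage measurable_norm)).symm
    _ = d * μ.real (ball 0 1) * ∫ r in a..b, r⁻¹ * g r := by
      rw [integral_fun_norm_addHaar, ← hd, radial_density, setIntegral_indicator measurableSet_Icc,
        Set.inter_eq_self_of_subset_right Icc_subset_Ioi, integral_Icc_eq_integral_Ioc,
        ← intervalIntegral.integral_of_le hab, nsmul_eq_mul, smul_eq_mul, mul_assoc]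

lemma intervalIntegral_inv_mul_comp_one_sub_mul_log {η : ℝ} (hη : 0 < η) {h : ℝ → ℝ}
    (hh : Continuous h) :
    ∫ r in 1..Real.exp η⁻¹, r⁻¹ * (η * h (1 - η * Real.log r)) = ∫ s in 0..1, h s := by
  have pos_of_mem {r : ℝ} (hr : r ∈ Set.uIcc 1 (Real.exp η⁻¹)) : 0 < r :=
    (lt_min one_pos (Real.exp_pos _)).trans_le hr.1
  have hderiv (r : ℝ) (hr : r ∈ Set.uIcc 1 (Real.exp η⁻¹)) :
      HasDerivAt (fun r => 1 - η * Real.log r) (-(η * r⁻¹)) r :=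
    ((Real.hasDerivAt_log (pos_of_mem hr).ne').const_mul η).const_sub 1
  have hderiv_cont : ContinuousOn (fun r => -(η * r⁻¹)) (Set.uIcc 1 (Real.exp η⁻¹)) :=
    (continuousOn_const.mul (continuousOn_id.inv₀ fun r hr => (pos_of_mem hr).ne')).neg
  have hsubst := intervalIntegral.integral_comp_mul_deriv hderiv hderiv_cont hh
  rw [Real.log_one, Real.log_exp, mul_inv_cancel₀ hη.ne', mul_zero, sub_zero, sub_self] at hsubst
  rw [intervalIntegral.integral_symm 1 0, ← hsubst, ← intervalIntegral.integral_neg]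
  congr 1 with r
  simp only [Function.comp_apply]
  ring

lemma intervalIntegral_mul_deriv_smoothTransition_add (A B : ℝ) :
    ∫ s in 0..1, (A * deriv Real.smoothTransition s + B) = A + B := by
  have hcont : Continuous (deriv Real.smoothTransition) :=
    Real.smoothTransition.contDiff.continuous_deriv le_rfl
  have hFTC : ∫ s in 0..1, deriv Real.smoothTransition s = 1 := by
    rw [intervalIntegral.integral_deriv_eq_sub
      (fun s _ => Real.smoothTransition.contDiff.differentiable one_ne_zero s)
      (hcont.intervalIntegrable 0 1)]
    simp
  rw [intervalIntegral.integral_add ((hcont.const_mul A).intervalIntegrable 0 1) (by simp),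
    intervalIntegral.integral_const_mul, hFTC]
  simp

end Integrals

section LogCutoffIntegral

variable {N : ℕ} {η : ℝ}

lemma gradNorm_logCutoff_eq_zero {m : ℕ} (hm : m ≠ 0) (hη : 0 < η) {x : EuclideanSpace ℝ (Fin N)}
    (hx : ‖x‖ ∉ Set.Icc 1 (Real.exp η⁻¹)) : gradNorm N m (logCutoff η) x = 0 := by
  rcases lt_or_ge ‖x‖ 1 with hlt | hge
  · refine gradNorm_eq_zero_of_eventuallyEq_const (c := 1) hm ?_
    filter_upwards [continuous_norm.continuousAt.eventually_lt continuousAt_const hlt] with y hy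
    exact logCutoff_of_norm_le_one hη.le hy.le
  · have hgt : Real.exp η⁻¹ < ‖x‖ := not_le.1 fun hle => hx ⟨hge, hle⟩
    refine gradNorm_eq_zero_of_eventuallyEq_const (c := 0) hm ?_
    filter_upwards [continuousAt_const.eventually_lt continuous_norm.continuousAt hgt] with y hy
    exact logCutoff_of_exp_inv_le_norm hη hy.le

lemma setIntegral_annulus_radial (hN : 0 < N) (hη : 0 < η) {h : ℝ → ℝ} (hh : Continuous h) :
    ∫ x : EuclideanSpace ℝ (Fin N) in {x | ‖x‖ ∈ Set.Icc 1 (Real.exp η⁻¹)},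
      (‖x‖ ^ N)⁻¹ * (η * h (1 - η * Real.log ‖x‖)) = omegaSphere N * ∫ s in 0..1, h s := by
  have : Nonempty (Fin N) := ⟨⟨0, hN⟩⟩
  have hpolar := setIntegral_norm_mem_Icc_addHaar (volume : Measure (EuclideanSpace ℝ (Fin N)))
    one_pos (Real.one_le_exp (inv_nonneg.2 hη.le)) fun r => η * h (1 - η * Real.log r)
  rw [finrank_euclideanSpace_fin, intervalIntegral_inv_mul_comp_one_sub_mul_log hη hh] at hpolar
  exact hpolar

lemma exists_integral_gradNorm_logCutoff_le (hN : 0 < N) :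
    ∃ K : ℝ, ∀ η ∈ Set.Ioc (0 : ℝ) 1,
      ∫ x, gradNorm N N (logCutoff η) x ≤ omegaSphere N * (√(ell N hN) + K * η) := by
  obtain ⟨K, hK⟩ := exists_gradNorm_logCutoff_le N hN.ne'
  refine ⟨K, fun η hη => ?_⟩
  set A : Set (EuclideanSpace ℝ (Fin N)) := {x | ‖x‖ ∈ Set.Icc 1 (Real.exp η⁻¹)}
  let h (s : ℝ) : ℝ := √(ell N hN) * deriv Real.smoothTransition s + K * η
  have h_cont : Continuous h :=
    ((Real.smoothTransition.contDiff.continuous_deriv le_rfl).const_mul _).add continuous_const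
  have ne_zero_of_mem {x : EuclideanSpace ℝ (Fin N)} (hx : x ∈ A) : ‖x‖ ≠ 0 :=
    (zero_lt_one.trans_le hx.1).ne'
  have A_closed : IsClosed A := isClosed_Icc.preimage continuous_norm
  have A_compact : IsCompact A :=
    (isCompact_closedBall 0 (Real.exp η⁻¹)).of_isClosed_subset A_closed
      fun x hx => mem_closedBall_zero_iff.2 hx.2
  have gradNorm_integrable : Integrable (gradNorm N N (logCutoff η)) :=
    integrable_gradNorm (contDiff_logCutoff hη.1.le) (hasCompactSupport_logCutoff hη.1)
  have bound_integrable :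
      IntegrableOn (fun x => (‖x‖ ^ N)⁻¹ * (η * h (1 - η * Real.log ‖x‖))) A := by
    refine ContinuousOn.integrableOn_compact A_compact (.mul ?_ ?_)
    · exact (continuous_norm.pow N).continuousOn.inv₀ fun x hx => pow_ne_zero N (ne_zero_of_mem hx)
    · exact continuousOn_const.mul (h_cont.comp_continuousOn (continuousOn_const.sub
        (continuousOn_const.mul (continuous_norm.continuousOn.log fun x => ne_zero_of_mem))))
  have pointwise_bound (x : EuclideanSpace ℝ (Fin N)) (hx : x ∈ A) :
      gradNorm N N (logCutoff η) x ≤ (‖x‖ ^ N)⁻¹ * (η * h (1 - η * Real.log ‖x‖)) := by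
    refine (hK η hη x hx).trans_eq ?_
    rw [gradNorm_logNorm_eq_sqrt_ell hN (norm_ne_zero_iff.1 (ne_zero_of_mem hx)), inv_pow]
    ring
  calc ∫ x, gradNorm N N (logCutoff η) x
      = ∫ x in A, gradNorm N N (logCutoff η) x :=
        (setIntegral_eq_integral_of_forall_compl_eq_zero fun x hx =>
          gradNorm_logCutoff_eq_zero hN.ne' hη.1 hx).symm
    _ ≤ ∫ x in A, (‖x‖ ^ N)⁻¹ * (η * h (1 - η * Real.log ‖x‖)) :=
        setIntegral_mono_on gradNorm_integrable.integrableOn bound_integrable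
          A_closed.measurableSet pointwise_bound
    _ = omegaSphere N * (√(ell N hN) + K * η) := by
        rw [setIntegral_annulus_radial hN hη.1 h_cont,
          intervalIntegral_mul_deriv_smoothTransition_add]

lemma exists_integral_gradNorm_logCutoff_lt (hN : 0 < N) {ε : ℝ} (hε : 0 < ε) :
    ∃ η > 0, ∫ x, gradNorm N N (logCutoff η) x < √(ell N hN) * omegaSphere N + ε := by
  obtain ⟨K, hK⟩ := exists_integral_gradNorm_logCutoff_le hN
  have bound_tendsto : Tendsto (fun η => omegaSphere N * (√(ell N hN) + K * η))
      (nhdsWithin 0 (Set.Ioi 0)) (nhds (√(ell N hN) * omegaSphere N)) := by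
    refine Tendsto.mono_left ?_ nhdsWithin_le_nhds
    convert (by fun_prop : Continuous fun η => omegaSphere N * (√(ell N hN) + K * η)).tendsto 0
      using 2
    ring
  obtain ⟨η, hη_lt, hη⟩ := ((bound_tendsto.eventually_lt_const (lt_add_of_pos_right _ hε)).and
    (Ioc_mem_nhdsGT one_pos)).exists
  exact ⟨η, hη.1, (hK η hη).trans_lt hη_lt⟩

end LogCutoffIntegral

lemma exists_tsupport_comp_smul_sub_subset {E : Type*} [NormedAddCommGroup E] [NormedSpace ℝ E]
    {u : E → ℝ} (hu : HasCompactSupport u) {Ω : Set E} (hΩ : IsOpen Ω) (hne : Ω.Nonempty) :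
    ∃ c : ℝ, c ≠ 0 ∧ ∃ a : E, HasCompactSupport (fun x => u (c • (x - a))) ∧
      tsupport (fun x => u (c • (x - a))) ⊆ Ω := by
  obtain ⟨a, ha⟩ := hne
  obtain ⟨ρ, hρ, hball⟩ := nhds_basis_closedBall.mem_iff.1 (hΩ.mem_nhds ha)
  obtain ⟨R, hR, hsupp⟩ := hu.isCompact.isBounded.subset_closedBall_lt 0 0
  have hc : R / ρ ≠ 0 := (div_pos hR hρ).ne'
  let φ : E ≃ₜ E := (Homeomorph.subRight a).trans (Homeomorph.smulOfNeZero (R / ρ) hc)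
  have tsupport_eq : tsupport (u ∘ φ) = φ ⁻¹' tsupport u := tsupport_comp_eq_preimage u φ
  refine ⟨R / ρ, hc, a, hu.comp_homeomorph φ, ?_⟩
  change tsupport (u ∘ φ) ⊆ Ω
  rw [tsupport_eq]
  refine fun x hx => hball ?_
  have hφx : R / ρ * ‖x - a‖ ≤ R := by
    simpa [φ, norm_smul, abs_of_pos hR, abs_of_pos hρ] using hsupp hx
  rw [div_mul_eq_mul_div, div_le_iff₀ hρ] at hφx
  exact mem_closedBall_iff_norm.2 (le_of_mul_le_mul_left hφx hR)

lemma iSup_abs_comp_smul_sub {E : Type*} [AddCommGroup E] [Module ℝ E] (u : E → ℝ) {c : ℝ}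
    (hc : c ≠ 0) (a : E) : ⨆ x, |u (c • (x - a))| = ⨆ x, |u x| := by
  have hsurj : Function.Surjective fun x => c • (x - a) := fun y =>
    ⟨c⁻¹ • y + a, by simp [smul_inv_smul₀ hc]⟩
  exact hsurj.iSup_comp fun y => |u y|

/-- the constant `(√(ℓ_N) ω_{N-1})⁻¹` remains optimal on every nonempty open
set `Ω ⊆ ℝ^N`: for every `ε > 0` there is a nonzero smooth function supported in `Ω` with
`∫_Ω |∇^N u| < (√(ℓ_N) ω_{N-1} + ε) ‖u‖_∞`. -/
theorem statement10 (N : ℕ) (hN : 1 ≤ N)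
    (Ω : Set (EuclideanSpace ℝ (Fin N))) (hΩ : IsOpen Ω) (hΩne : Ω.Nonempty)
    (ε : ℝ) (hε : 0 < ε) :
    ∃ u : EuclideanSpace ℝ (Fin N) → ℝ,
      ContDiff ℝ (⊤ : ℕ∞) u ∧ HasCompactSupport u ∧ tsupport u ⊆ Ω ∧ u ≠ 0 ∧
        ∫ x in Ω, gradNorm N N u x <
          (Real.sqrt (ell N (by omega)) * omegaSphere N + ε) * ⨆ x, |u x| := by
  obtain ⟨η, hη, hη_lt⟩ := exists_integral_gradNorm_logCutoff_lt hN hε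
  let v : EuclideanSpace ℝ (Fin N) → ℝ := logCutoff η
  have v_contDiff {n : ℕ∞} : ContDiff ℝ n v := contDiff_logCutoff hη.le
  obtain ⟨c, hc, a, hcompact, hsupp⟩ :=
    exists_tsupport_comp_smul_sub_subset (hasCompactSupport_logCutoff hη) hΩ hΩne
  let u : EuclideanSpace ℝ (Fin N) → ℝ := fun x => v (c • (x - a))
  have u_contDiff {n : ℕ∞} : ContDiff ℝ n u := v_contDiff.comp (by fun_prop)
  have u_iSup : ⨆ x, |u x| = 1 := (iSup_abs_comp_smul_sub v hc a).trans (iSup_abs_logCutoff hη.le)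
  refine ⟨u, u_contDiff, hcompact, hsupp, fun hu => by simp [hu] at u_iSup, ?_⟩
  rw [u_iSup, mul_one]
  calc ∫ x in Ω, gradNorm N N u x
      ≤ ∫ x, gradNorm N N u x := setIntegral_le_integral (integrable_gradNorm u_contDiff hcompact)
        (.of_forall (gradNorm_nonneg u))
    _ = ∫ x, gradNorm N N v x := integral_gradNorm_comp_smul_sub v_contDiff hc a
    _ < _ := hη_lt
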